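/- For |q| < 1, the series ψ(q) = Σ_{k=0}^∞ (−1)^k (2k+1) q^{k(k+1)/2} equals the infinite product ∏_{ν=1}^∞ (1 − q^ν)^3. -/

import Mathlib

/-!
The finite triple product `(1 - a) ∏_{ν=1}^n (1 - a q^ν)(1 - a⁻¹ q^ν)` is a Laurent polynomial in
`a` whose coefficients are, up to sign, powers of `q` times Gaussian binomials. Passing from `n` to
`n + 1` multiplies it by `(1 - a Q)(1 - a⁻¹ Q) = (1 - Q)² - Q (a - 2 + a⁻¹)`, `Q = q^(n+1)`, and
dividing by `1 - a` and letting `a → 1` weights the coefficients linearly. A linear weight kills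
the second difference `a - 2 + a⁻¹`, so the weighted sum is `∏_{ν=1}^n (1 - q^ν)²`, over any
commutative ring. One further factor `∏_{ν=1}^n (1 - q^ν)` turns each Gaussian binomial into
a product tending to `1`, and dominated convergence gives the theorem without any division.
-/

open Filter Finset Topology

section CommRing

variable {R : Type*} [CommRing R]

/-- The Gaussian binomial coefficient, defined by the Pascal rule that avoids subtraction in the
exponent; like `Nat.choose`, it vanishes when the lower index exceeds the upper one. -/
def qChoose (q : R) : ℕ → ℕ → R
  | _, 0 => 1
  | 0, _ + 1 => 0
  | n + 1, k + 1 => qChoose q n k + q ^ (k + 1) * qChoose q n (k + 1)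

/-- The finite `q`-Pochhammer symbol `(a; q)_n`. -/
def qPochhammer (a q : R) (n : ℕ) : R := ∏ i ∈ range n, (1 - a * q ^ i)

theorem qChoose_zero_right (q : R) (n : ℕ) : qChoose q n 0 = 1 := by
  cases n <;> rfl

theorem qChoose_succ_succ (q : R) (n k : ℕ) :
    qChoose q (n + 1) (k + 1) = qChoose q n k + q ^ (k + 1) * qChoose q n (k + 1) := rfl

theorem qChoose_eq_zero_of_lt (q : R) {n k : ℕ} (h : n < k) : qChoose q n k = 0 := by
  induction n generalizing k with
  | zero => obtain ⟨k, rfl⟩ := Nat.exists_eq_add_one.2 h; rfl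
  | succ n ih =>
    obtain ⟨k, rfl⟩ := Nat.exists_eq_add_one.2 (n.succ_pos.trans h)
    rw [qChoose_succ_succ, ih (by lia), ih (by lia), mul_zero, add_zero]

theorem qChoose_self (q : R) (n : ℕ) : qChoose q n n = 1 := by
  induction n with
  | zero => rfl
  | succ n ih =>
    rw [qChoose_succ_succ, ih, qChoose_eq_zero_of_lt q n.lt_succ_self, mul_zero, add_zero]

-- For `n < k` the truncated exponent is harmless: all three coefficients vanish.
theorem qChoose_succ_succ' (q : R) (n k : ℕ) :
    qChoose q (n + 1) (k + 1) = qChoose q n (k + 1) + q ^ (n - k) * qChoose q n k := by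
  induction n generalizing k with
  | zero => cases k <;> simp [qChoose]
  | succ n ih =>
    cases k with
    | zero =>
      have h := ih 0
      have h' := qChoose_succ_succ q n 0
      rw [qChoose_succ_succ]
      simp only [qChoose_zero_right, zero_add, Nat.sub_zero] at h h' ⊢
      linear_combination q * h - h'
    | succ k =>
      have h_mid : q ^ (k + 2) * q ^ (n - (k + 1)) * qChoose q n (k + 1) =
          q ^ (n - k) * q ^ (k + 1) * qChoose q n (k + 1) := by
        rcases lt_or_ge n (k + 1) with h | h
        · simp only [qChoose_eq_zero_of_lt q h, mul_zero]
        · rw [← pow_add, ← pow_add, show k + 2 + (n - (k + 1)) = n - k + (k + 1) by lia]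
      rw [qChoose_succ_succ, Nat.add_sub_add_right]
      linear_combination ih k + q ^ (k + 2) * ih (k + 1) - qChoose_succ_succ q n (k + 1) -
        q ^ (n - k) * qChoose_succ_succ q n k + h_mid

theorem qChoose_add_two (q : R) (n k : ℕ) :
    qChoose q (n + 2) (k + 2) = q ^ (n - k) * qChoose q n k +
      (1 + q ^ (n + 1)) * qChoose q n (k + 1) + q ^ (k + 2) * qChoose q n (k + 2) := by
  rw [qChoose_succ_succ q (n + 1), qChoose_succ_succ' q n k, qChoose_succ_succ' q n (k + 1)]
  rcases lt_or_ge n (k + 1) with h | h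
  · rw [qChoose_eq_zero_of_lt q h]
    ring
  · obtain ⟨d, rfl⟩ := Nat.exists_eq_add_of_le' h
    rw [Nat.add_sub_cancel]
    ring

theorem qChoose_symm_add (q : R) (k m : ℕ) : qChoose q (k + m) k = qChoose q (k + m) m := by
  induction k generalizing m with
  | zero => rw [zero_add, qChoose_zero_right, qChoose_self]
  | succ k ihk =>
    induction m with
    | zero => rw [add_zero, qChoose_zero_right, qChoose_self]
    | succ m ihm =>
      rw [← add_assoc, qChoose_succ_succ, qChoose_succ_succ', ihm,
        show k + 1 + m = k + (m + 1) by ring, ihk, show k + (m + 1) - m = k + 1 by lia]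

theorem one_sub_pow_mul_qChoose_succ_succ (q : R) (n k : ℕ) :
    (1 - q ^ (k + 1)) * qChoose q (n + 1) (k + 1) = (1 - q ^ (n + 1)) * qChoose q n k := by
  rcases lt_or_ge n k with h | h
  · rw [qChoose_eq_zero_of_lt q h, qChoose_eq_zero_of_lt q (Nat.succ_lt_succ h)]
    ring
  · obtain ⟨d, rfl⟩ := Nat.exists_eq_add_of_le' h
    have h₁ := qChoose_succ_succ q (d + k) k
    have h₂ := qChoose_succ_succ' q (d + k) k
    rw [Nat.add_sub_cancel] at h₂
    linear_combination h₁ - q ^ (k + 1) * h₂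

theorem qPochhammer_succ (a q : R) (n : ℕ) :
    qPochhammer a q (n + 1) = qPochhammer a q n * (1 - a * q ^ n) :=
  prod_range_succ _ _

theorem qPochhammer_add (a q : R) (m n : ℕ) :
    qPochhammer a q (m + n) = qPochhammer a q m * qPochhammer (a * q ^ m) q n := by
  simp only [qPochhammer, prod_range_add, pow_add, mul_assoc]

theorem qChoose_mul_qPochhammer (q : R) (m k : ℕ) :
    qChoose q (m + k) k * qPochhammer q q k = qPochhammer (q ^ (m + 1)) q k := by
  induction k with
  | zero => simp [qChoose_zero_right, qPochhammer]
  | succ k ih =>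
    rw [qPochhammer_succ, qPochhammer_succ, ← ih]
    linear_combination qPochhammer q q k * one_sub_pow_mul_qChoose_succ_succ q (m + k) k

theorem triangular_succ (j : ℕ) : (j + 1) * (j + 1 + 1) / 2 = j * (j + 1) / 2 + (j + 1) := by
  rw [← Nat.add_mul_div_left _ _ two_pos]
  ring_nf

/-- The coefficient of `a⁻ʲ` in `(1 - a) ∏_{ν=1}^n (1 - a q^ν)(1 - a⁻¹ q^ν)`; the coefficient of
`aʲ⁺¹` is its negative. -/
def tripleProductCoeff (q : R) (n j : ℕ) : R :=
  (-1) ^ j * q ^ (j * (j + 1) / 2) * qChoose q (2 * n + 1) (n + 1 + j)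

theorem tripleProductCoeff_eq_zero_of_lt (q : R) {n j : ℕ} (h : n < j) :
    tripleProductCoeff q n j = 0 := by
  rw [tripleProductCoeff, qChoose_eq_zero_of_lt q (by lia), mul_zero]

theorem tripleProductCoeff_succ_zero (q : R) (n : ℕ) :
    tripleProductCoeff q (n + 1) 0 =
      (1 + q ^ (n + 1) + (q ^ (n + 1)) ^ 2) * tripleProductCoeff q n 0 -
        q ^ (n + 1) * tripleProductCoeff q n 1 := by
  have h_symm : qChoose q (2 * n + 1) n = qChoose q (2 * n + 1) (n + 1) := by
    rw [show 2 * n + 1 = n + (n + 1) by ring, qChoose_symm_add]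
  have h := qChoose_add_two q (2 * n + 1) n
  rw [h_symm, show 2 * n + 1 - n = n + 1 by lia] at h
  simp only [tripleProductCoeff, show 2 * (n + 1) + 1 = 2 * n + 1 + 2 by ring, add_zero, zero_add,
    h]
  ring

theorem tripleProductCoeff_succ_succ (q : R) (n j : ℕ) :
    tripleProductCoeff q (n + 1) (j + 1) =
      (1 + (q ^ (n + 1)) ^ 2) * tripleProductCoeff q n (j + 1) -
        q ^ (n + 1) * (tripleProductCoeff q n j + tripleProductCoeff q n (j + 2)) := by
  rcases lt_or_ge n j with h | h
  · simp only [tripleProductCoeff_eq_zero_of_lt q (show n + 1 < j + 1 by lia),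
      tripleProductCoeff_eq_zero_of_lt q (show n < j by lia),
      tripleProductCoeff_eq_zero_of_lt q (show n < j + 1 by lia),
      tripleProductCoeff_eq_zero_of_lt q (show n < j + 2 by lia), mul_zero, add_zero, sub_zero]
  · obtain ⟨d, rfl⟩ := Nat.exists_eq_add_of_le' h
    have h := qChoose_add_two q (2 * (d + j) + 1) (d + j + 1 + j)
    rw [show 2 * (d + j) + 1 - (d + j + 1 + j) = d by lia] at h
    simp only [tripleProductCoeff, show 2 * (d + j + 1) + 1 = 2 * (d + j) + 1 + 2 by ring,
      show d + j + 1 + 1 + (j + 1) = d + j + 1 + j + 2 by ring, h, triangular_succ, ← add_assoc]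
    ring

theorem sum_odd_mul_tripleProductCoeff_succ (q : R) (n m : ℕ) :
    ∑ j ∈ range (m + 1), (2 * j + 1) * tripleProductCoeff q (n + 1) j =
      (1 - q ^ (n + 1)) ^ 2 * ∑ j ∈ range (m + 1), (2 * j + 1) * tripleProductCoeff q n j -
        q ^ (n + 1) * ((2 * m + 1) * tripleProductCoeff q n (m + 1) -
          (2 * m + 3) * tripleProductCoeff q n m) := by
  induction m with
  | zero =>
    simp only [zero_add, sum_range_one, tripleProductCoeff_succ_zero]
    push_cast
    ring
  | succ m ih =>
    rw [sum_range_succ, ih, sum_range_succ _ (m + 1), tripleProductCoeff_succ_succ]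
    push_cast
    ring

theorem sum_odd_mul_tripleProductCoeff (q : R) (n : ℕ) :
    ∑ j ∈ range (n + 1), (2 * j + 1) * tripleProductCoeff q n j = qPochhammer q q n ^ 2 := by
  induction n with
  | zero => simp [tripleProductCoeff, qPochhammer, qChoose_self]
  | succ n ih =>
    rw [sum_odd_mul_tripleProductCoeff_succ, sum_range_succ, ih, qPochhammer_succ,
      tripleProductCoeff_eq_zero_of_lt q (show n < n + 1 by lia),
      tripleProductCoeff_eq_zero_of_lt q (show n < n + 1 + 1 by lia)]
    ring

theorem tripleProductCoeff_mul_qPochhammer (q : R) (d j : ℕ) :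
    tripleProductCoeff q (d + j) j * qPochhammer q q (d + j) =
      (-1) ^ j * q ^ (j * (j + 1) / 2) *
        (qPochhammer (q ^ (d + 2 * j + 2)) q d * qPochhammer (q ^ (d + 1)) q j) := by
  have h := qChoose_mul_qPochhammer q (d + 2 * j + 1) d
  rw [← qChoose_symm_add] at h
  rw [tripleProductCoeff, qPochhammer_add, ← pow_succ', ← h,
    show d + 2 * j + 1 + d = 2 * (d + j) + 1 by ring,
    show d + j + 1 + j = d + 2 * j + 1 by ring]
  ring

theorem tsum_odd_mul_tripleProductCoeff_mul_qPochhammer [TopologicalSpace R] (q : R) (n : ℕ) :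
    ∑' j : ℕ, (2 * j + 1) * (tripleProductCoeff q n j * qPochhammer q q n) =
      qPochhammer q q n ^ 3 := by
  rw [pow_succ, ← sum_odd_mul_tripleProductCoeff, sum_mul, tsum_eq_sum (s := range (n + 1))]
  · simp only [mul_assoc]
  · intro j hj
    rw [tripleProductCoeff_eq_zero_of_lt q (by simpa using hj), zero_mul, mul_zero]

end CommRing

theorem summable_odd_mul_geometric {R : Type*} [NormedRing R] [HasSummableGeomSeries R] {r : R}
    (hr : ‖r‖ < 1) : Summable fun j : ℕ ↦ (2 * j + 1) * r ^ j := by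
  refine (((summable_pow_mul_geometric_of_norm_lt_one 1 hr).mul_left 2).add
    (summable_geometric_of_norm_lt_one hr)).congr fun j ↦ ?_
  rw [pow_one, add_mul, one_mul, mul_assoc]

section NormedCommRing

variable {R : Type*} [NormedCommRing R] [NormOneClass R] {q : R}

theorem norm_qPochhammer_sub_one_le (hq : ‖q‖ < 1) (a : R) (n : ℕ) :
    ‖qPochhammer a q n - 1‖ ≤ Real.exp (‖a‖ / (1 - ‖q‖)) - 1 := by
  have h_sum : ∑ i ∈ range n, ‖-(a * q ^ i)‖ ≤ ‖a‖ / (1 - ‖q‖) :=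
    calc ∑ i ∈ range n, ‖-(a * q ^ i)‖ ≤ ∑ i ∈ range n, ‖a‖ * ‖q‖ ^ i := by
          gcongr with i
          rw [norm_neg]
          exact norm_mul_le_of_le le_rfl (norm_pow_le q i)
      _ = ‖a‖ * ∑ i ∈ range n, ‖q‖ ^ i := (mul_sum ..).symm
      _ ≤ ‖a‖ * (1 - ‖q‖)⁻¹ := by
          gcongr
          rw [← tsum_geometric_of_lt_one (norm_nonneg q) hq]
          exact (summable_geometric_of_lt_one (norm_nonneg q) hq).sum_le_tsum _
            fun i _ ↦ by positivity
  simp only [qPochhammer, sub_eq_add_neg 1 (a * _)]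
  exact (norm_prod_one_add_sub_one_le _ _).trans (by gcongr)

theorem norm_qPochhammer_le (hq : ‖q‖ < 1) (a : R) (n : ℕ) :
    ‖qPochhammer a q n‖ ≤ Real.exp (‖a‖ / (1 - ‖q‖)) :=
  calc ‖qPochhammer a q n‖ ≤ ‖qPochhammer a q n - 1‖ + ‖(1 : R)‖ := norm_le_norm_sub_add _ _
    _ ≤ Real.exp (‖a‖ / (1 - ‖q‖)) := by
        grw [norm_qPochhammer_sub_one_le hq, norm_one, sub_add_cancel]

theorem tendsto_qPochhammer_one {ι : Type*} {l : Filter ι} (hq : ‖q‖ < 1) {a : ι → R}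
    (ha : Tendsto a l (𝓝 0)) (n : ι → ℕ) :
    Tendsto (fun i ↦ qPochhammer (a i) q (n i)) l (𝓝 1) := by
  rw [tendsto_iff_norm_sub_tendsto_zero]
  refine squeeze_zero (fun _ ↦ norm_nonneg _)
    (fun i ↦ norm_qPochhammer_sub_one_le hq (a i) (n i)) ?_
  simpa using ((Real.continuous_exp.tendsto _).comp (ha.norm.div_const (1 - ‖q‖))).sub_const 1

theorem tendsto_tripleProductCoeff_mul_qPochhammer (hq : ‖q‖ < 1) (j : ℕ) :
    Tendsto (fun n ↦ tripleProductCoeff q n j * qPochhammer q q n) atTop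
      (𝓝 ((-1) ^ j * q ^ (j * (j + 1) / 2))) := by
  rw [← tendsto_add_atTop_iff_nat j]
  simp only [tripleProductCoeff_mul_qPochhammer]
  have h_pow (k : ℕ) : Tendsto (fun d ↦ q ^ (d + k)) atTop (𝓝 0) :=
    (tendsto_add_atTop_iff_nat k).2 (tendsto_pow_atTop_nhds_zero_of_norm_lt_one hq)
  have h_left := tendsto_qPochhammer_one hq (h_pow (2 * j + 2)) fun d ↦ d
  have h_right := tendsto_qPochhammer_one hq (h_pow 1) fun _ ↦ j
  simpa only [add_assoc, mul_one] using
    (h_left.mul h_right).const_mul ((-1) ^ j * q ^ (j * (j + 1) / 2))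

theorem norm_tripleProductCoeff_mul_qPochhammer_le (hq : ‖q‖ < 1) (n j : ℕ) :
    ‖tripleProductCoeff q n j * qPochhammer q q n‖ ≤
      ‖q‖ ^ j * Real.exp (1 / (1 - ‖q‖)) ^ 2 := by
  rcases lt_or_ge n j with h | h
  · rw [tripleProductCoeff_eq_zero_of_lt q h, zero_mul, norm_zero]
    positivity
  obtain ⟨d, rfl⟩ := Nat.exists_eq_add_of_le' h
  have h_sign : ‖(-1 : R) ^ j‖ ≤ 1 := by simpa using norm_pow_le (-1 : R) j
  have h_triangle : ‖q ^ (j * (j + 1) / 2)‖ ≤ ‖q‖ ^ j := by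
    grw [norm_pow_le]
    refine pow_le_pow_of_le_one (norm_nonneg q) hq.le ?_
    cases j <;> grind [triangular_succ]
  have h_poch (k m : ℕ) : ‖qPochhammer (q ^ k) q m‖ ≤ Real.exp (1 / (1 - ‖q‖)) := by
    have := sub_pos.2 hq
    grw [norm_qPochhammer_le hq, norm_pow_le, pow_le_one₀ (norm_nonneg q) hq.le]
  rw [tripleProductCoeff_mul_qPochhammer, sq]
  refine norm_mul_le_of_le ?_ (norm_mul_le_of_le (h_poch _ _) (h_poch _ _))
  simpa using norm_mul_le_of_le h_sign h_triangle

theorem tendsto_qPochhammer_self_pow [CompleteSpace R] (hq : ‖q‖ < 1) (k : ℕ) :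
    Tendsto (fun n ↦ qPochhammer q q n ^ k) atTop (𝓝 (∏' ν : ℕ, (1 - q ^ (ν + 1)) ^ k)) := by
  have h_summable : Summable fun ν : ℕ ↦ ‖-q ^ (ν + 1)‖ := by
    simpa only [norm_neg] using
      (summable_nat_add_iff 1).2 (summable_norm_geometric_of_norm_lt_one hq)
  have h_mult := (multipliable_one_add_of_summable h_summable).pow k
  simpa only [qPochhammer, ← pow_succ', prod_pow, ← sub_eq_add_neg]
    using h_mult.tendsto_prod_tprod_nat

theorem psi_eq_eta_cubed_general [CompleteSpace R] (hq : ‖q‖ < 1) :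
    ∑' k : ℕ, (-1 : R) ^ k * (2 * k + 1) * q ^ (k * (k + 1) / 2) =
      ∏' ν : ℕ, (1 - q ^ (ν + 1)) ^ 3 := by
  let f (n j : ℕ) : R := (2 * j + 1) * (tripleProductCoeff q n j * qPochhammer q q n)
  have h_term (j : ℕ) :
      Tendsto (f · j) atTop (𝓝 ((-1) ^ j * (2 * j + 1) * q ^ (j * (j + 1) / 2))) := by
    rw [mul_right_comm, mul_comm]
    exact (tendsto_tripleProductCoeff_mul_qPochhammer hq j).const_mul _
  have h_bound (n j : ℕ) :
      ‖f n j‖ ≤ (2 * j + 1) * (‖q‖ ^ j * Real.exp (1 / (1 - ‖q‖)) ^ 2) := by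
    refine norm_mul_le_of_le ?_ (norm_tripleProductCoeff_mul_qPochhammer_le hq n j)
    simpa using Nat.norm_cast_le (α := R) (2 * j + 1)
  have h_summable :
      Summable fun j : ℕ ↦ (2 * j + 1) * (‖q‖ ^ j * Real.exp (1 / (1 - ‖q‖)) ^ 2) := by
    simpa only [mul_assoc] using
      (summable_odd_mul_geometric (by rwa [norm_norm] : ‖‖q‖‖ < 1)).mul_right _
  have h_lim := tendsto_tsum_of_dominated_convergence h_summable h_term (.of_forall h_bound)
  simp only [f, tsum_odd_mul_tripleProductCoeff_mul_qPochhammer] at h_lim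
  exact tendsto_nhds_unique h_lim (tendsto_qPochhammer_self_pow hq 3)

end NormedCommRing

/-- Jacobi's identity for the cube of the Euler function:
`ψ(q) = Σ_{k≥0} (−1)^k (2k+1) q^{k(k+1)/2} = ∏_{ν≥1} (1 − q^ν)^3` for `|q| < 1`. -/
theorem psi_eq_eta_cubed (q : ℂ) (hq : ‖q‖ < 1) :
    ∑' k : ℕ, (-1 : ℂ) ^ k * (2 * k + 1) * q ^ (k * (k + 1) / 2)
      = ∏' ν : ℕ, (1 - q ^ (ν + 1)) ^ 3 :=
  psi_eq_eta_cubed_general hq
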